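/- arXiv:1910.10778 — 2 statements merged into one kernel-verified Lean document; each statement's English description precedes it below -/
import Mathlib

section
/- In the tied braid monoid TB_n^B of type B, the following commutation relations between generalized ties and braid generators hold: σ_i η_{i,j} = η_{i+1,j} σ_i whenever 1 ≤ i and i+1 < j ≤ n; σ_j η_{i,j} = η_{i,j+1} σ_j whenever 1 ≤ i < j ≤ n−1; σ_{i−1} η_{i,j} = η_{i−1,j} σ_{i−1} whenever 2 ≤ i < j ≤ n; and σ_{j−1} η_{i,j} = η_{i,j−1} σ_{j−1} whenever 1 ≤ i < j−1 and j ≤ n. -/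
/-! The tied braid monoid of type B, `TBₙᴮ`, presented by generators and relations. -/

/-- Generators of the tied braid monoid of type B on `n` (moving) strands:
`sig i` is `σ_{i+1}`, `sigInv i` is `σ_{i+1}⁻¹`, `rho` is `ρ₁`, `rhoInv` is `ρ₁⁻¹`,
`phi` is `φ₁` and `eta i` is `η_{i+1}` (for `i : Fin (n-1)`). -/
inductive TBGen (n : ℕ) : Type
  | sig : Fin (n - 1) → TBGen n
  | sigInv : Fin (n - 1) → TBGen n
  | rho : TBGen n
  | rhoInv : TBGen n
  | phi : TBGen n
  | eta : Fin (n - 1) → TBGen n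

namespace TiedBraidB

variable (n : ℕ)

/-- The word `σᵢ` (for `1 ≤ i ≤ n-1`; junk value `1` otherwise). -/
def wσ (i : ℕ) : FreeMonoid (TBGen n) :=
  if h : 1 ≤ i ∧ i ≤ n - 1 then FreeMonoid.of (TBGen.sig ⟨i - 1, by omega⟩) else 1

/-- The word `σᵢ⁻¹`. -/
def wσi (i : ℕ) : FreeMonoid (TBGen n) :=
  if h : 1 ≤ i ∧ i ≤ n - 1 then FreeMonoid.of (TBGen.sigInv ⟨i - 1, by omega⟩) else 1

/-- The word `ηᵢ`. -/
def wη (i : ℕ) : FreeMonoid (TBGen n) :=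
  if h : 1 ≤ i ∧ i ≤ n - 1 then FreeMonoid.of (TBGen.eta ⟨i - 1, by omega⟩) else 1

/-- The word `ρ₁`. -/
def wρ : FreeMonoid (TBGen n) := FreeMonoid.of TBGen.rho

/-- The word `ρ₁⁻¹`. -/
def wρi : FreeMonoid (TBGen n) := FreeMonoid.of TBGen.rhoInv

/-- The word `φ₁`. -/
def wφ : FreeMonoid (TBGen n) := FreeMonoid.of TBGen.phi

/-- The descending word `σₖ σₖ₋₁ ⋯ σ₁`. -/
def wσDesc : ℕ → FreeMonoid (TBGen n)
  | 0 => 1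
  | k + 1 => wσ n (k + 1) * wσDesc k

/-- The ascending word `σ₁ σ₂ ⋯ σₖ`. -/
def wσAsc : ℕ → FreeMonoid (TBGen n)
  | 0 => 1
  | k + 1 => wσAsc k * wσ n (k + 1)

/-- The descending word `σₖ⁻¹ σₖ₋₁⁻¹ ⋯ σ₁⁻¹`. -/
def wσiDesc : ℕ → FreeMonoid (TBGen n)
  | 0 => 1
  | k + 1 => wσi n (k + 1) * wσiDesc k

/-- The ascending word `σ₁⁻¹ σ₂⁻¹ ⋯ σₖ⁻¹`. -/
def wσiAsc : ℕ → FreeMonoid (TBGen n)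
  | 0 => 1
  | k + 1 => wσiAsc k * wσi n (k + 1)

/-- The defining relations of the tied braid monoid `TBₙᴮ` of type B. -/
inductive tbRel : FreeMonoid (TBGen n) → FreeMonoid (TBGen n) → Prop
  | sig_inv (i : ℕ) (h1 : 1 ≤ i) (h2 : i ≤ n - 1) :
      tbRel (wσ n i * wσi n i) 1
  | inv_sig (i : ℕ) (h1 : 1 ≤ i) (h2 : i ≤ n - 1) :
      tbRel (wσi n i * wσ n i) 1
  | rho_inv : tbRel (wρ n * wρi n) 1
  | inv_rho : tbRel (wρi n * wρ n) 1
  | sig_comm (i j : ℕ) (h1 : 1 ≤ i) (h2 : i + 1 < j) (h3 : j ≤ n - 1) :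
      tbRel (wσ n i * wσ n j) (wσ n j * wσ n i)
  | sig_braid (i : ℕ) (h1 : 1 ≤ i) (h2 : i + 1 ≤ n - 1) :
      tbRel (wσ n i * wσ n (i + 1) * wσ n i) (wσ n (i + 1) * wσ n i * wσ n (i + 1))
  | rho_sig (i : ℕ) (h1 : 2 ≤ i) (h2 : i ≤ n - 1) :
      tbRel (wρ n * wσ n i) (wσ n i * wρ n)
  | rho_sig_rho_sig (h : 2 ≤ n) :
      tbRel (wρ n * wσ n 1 * wρ n * wσ n 1) (wσ n 1 * wρ n * wσ n 1 * wρ n)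
  | eta_comm (i j : ℕ) (h1 : 1 ≤ i) (h2 : i ≤ n - 1) (h3 : 1 ≤ j) (h4 : j ≤ n - 1) :
      tbRel (wη n i * wη n j) (wη n j * wη n i)
  | eta_sig (i : ℕ) (h1 : 1 ≤ i) (h2 : i ≤ n - 1) :
      tbRel (wη n i * wσ n i) (wσ n i * wη n i)
  | eta_sig_far (i j : ℕ) (h1 : 1 ≤ i) (h2 : i ≤ n - 1) (h3 : 1 ≤ j) (h4 : j ≤ n - 1)
      (h5 : i + 1 < j ∨ j + 1 < i) :
      tbRel (wη n i * wσ n j) (wσ n j * wη n i)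
  | eta_sig_sig (i j : ℕ) (h1 : 1 ≤ i) (h2 : i ≤ n - 1) (h3 : 1 ≤ j) (h4 : j ≤ n - 1)
      (h5 : j = i + 1 ∨ i = j + 1) :
      tbRel (wη n i * wσ n j * wσ n i) (wσ n j * wσ n i * wη n j)
  | eta_sig_sigInv (i j : ℕ) (h1 : 1 ≤ i) (h2 : i ≤ n - 1) (h3 : 1 ≤ j) (h4 : j ≤ n - 1)
      (h5 : j = i + 1 ∨ i = j + 1) :
      tbRel (wη n i * wσ n j * wσi n i) (wσ n j * wσi n i * wη n j)
  | eta_eta_sig (i j : ℕ) (h1 : 1 ≤ i) (h2 : i ≤ n - 1) (h3 : 1 ≤ j) (h4 : j ≤ n - 1)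
      (h5 : j = i + 1 ∨ i = j + 1) :
      tbRel (wη n i * wη n j * wσ n i) (wσ n i * wη n i * wη n j)
  | eta_eta_sig' (i j : ℕ) (h1 : 1 ≤ i) (h2 : i ≤ n - 1) (h3 : 1 ≤ j) (h4 : j ≤ n - 1)
      (h5 : j = i + 1 ∨ i = j + 1) :
      tbRel (wη n i * wη n j * wσ n i) (wη n j * wσ n i * wη n j)
  | eta_idem (i : ℕ) (h1 : 1 ≤ i) (h2 : i ≤ n - 1) :
      tbRel (wη n i * wη n i) (wη n i)
  | phi_idem : tbRel (wφ n * wφ n) (wφ n)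
  | rho_eta (i : ℕ) (h1 : 1 ≤ i) (h2 : i ≤ n - 1) :
      tbRel (wρ n * wη n i) (wη n i * wρ n)
  | rho_phi : tbRel (wρ n * wφ n) (wφ n * wρ n)
  | phi_eta (i : ℕ) (h1 : 1 ≤ i) (h2 : i ≤ n - 1) :
      tbRel (wφ n * wη n i) (wη n i * wφ n)
  | phi_sig (i : ℕ) (h1 : 2 ≤ i) (h2 : i ≤ n - 1) :
      tbRel (wφ n * wσ n i) (wσ n i * wφ n)
  | phi_move (i : ℕ) (h1 : 2 ≤ i) (h2 : i ≤ n) :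
      tbRel (wσDesc n (i - 1) * wφ n * wσiAsc n (i - 1))
        (wσiDesc n (i - 1) * wφ n * wσAsc n (i - 1))
  | phi_eta_one (h : 2 ≤ n) :
      tbRel (wφ n * wη n 1) (wφ n * wσ n 1 * wφ n * wσi n 1)
  | phi_eta_one' (h : 2 ≤ n) :
      tbRel (wφ n * wσ n 1 * wφ n * wσi n 1) (wσ n 1 * wφ n * wσi n 1 * wη n 1)

/-- The tied braid monoid of type B on `n` strands. -/
def TB : Type := (conGen (tbRel n)).Quotient

instance : Monoid (TB n) := inferInstanceAs (Monoid (conGen (tbRel n)).Quotient)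

/-- The canonical projection from the free monoid on the generators onto `TBₙᴮ`. -/
def mk : FreeMonoid (TBGen n) →* TB n := Con.mk' _

/-- The generator `σᵢ` of `TBₙᴮ`. -/
def σB (i : ℕ) : TB n := mk n (wσ n i)

/-- The generator `σᵢ⁻¹` of `TBₙᴮ`. -/
def σiB (i : ℕ) : TB n := mk n (wσi n i)

/-- The generator `ρ₁` of `TBₙᴮ`. -/
def ρB : TB n := mk n (wρ n)

/-- The generator `ρ₁⁻¹` of `TBₙᴮ`. -/
def ρiB : TB n := mk n (wρi n)

/-- The generator `φ₁` of `TBₙᴮ`. -/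
def φB : TB n := mk n (wφ n)

/-- The generator `ηᵢ` of `TBₙᴮ`. -/
def ηB (i : ℕ) : TB n := mk n (wη n i)

/-- The word `σᵢ σᵢ₊₁ ⋯ σₖ` (empty if `k < i`). -/
def wσRange (i k : ℕ) : FreeMonoid (TBGen n) :=
  ((List.range' i (k + 1 - i)).map (wσ n)).prod

/-- The word `σₖ⁻¹ σₖ₋₁⁻¹ ⋯ σᵢ⁻¹` (empty if `k < i`). -/
def wσiRangeRev (i k : ℕ) : FreeMonoid (TBGen n) :=
  ((List.range' i (k + 1 - i)).reverse.map (wσi n)).prod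

/-- The word representing the generalized tie `η_{i,j}`:
`σᵢ ⋯ σ_{j-2} η_{j-1} σ_{j-2}⁻¹ ⋯ σᵢ⁻¹` for `i < j`, with the conventions
`η_{i,i} = 1` and `η_{j,i} = η_{i,j}`. -/
def wηg (i j : ℕ) : FreeMonoid (TBGen n) :=
  if i = j then 1
  else wσRange n (min i j) (max i j - 2) * wη n (max i j - 1) *
    wσiRangeRev n (min i j) (max i j - 2)

/-- The word representing the generalized tie `φⱼ = σ_{j-1} ⋯ σ₁ φ₁ σ₁⁻¹ ⋯ σ_{j-1}⁻¹`. -/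
def wφg (j : ℕ) : FreeMonoid (TBGen n) :=
  wσDesc n (j - 1) * wφ n * wσiAsc n (j - 1)

/-- The generalized tie `η_{i,j}` joining the `i`-th and `j`-th moving strands. -/
def ηg (i j : ℕ) : TB n := mk n (wηg n i j)

/-- The generalized tie `φⱼ` joining the fixed strand and the `j`-th moving strand. -/
def φg (j : ℕ) : TB n := mk n (wφg n j)

end TiedBraidB

namespace TiedBraidB

/-- Abstract form of the generalized tie `η_{i,i+1+d}`, by recursion on `d`. -/
def absT {M : Type*} [Monoid M] (s : ℕ → Mˣ) (e : ℕ → M) : ℕ → ℕ → M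
  | i, 0 => e i
  | i, d + 1 => s i * absT s e (i + 1) d * ((s i)⁻¹ : Mˣ)

section Abs

variable {M : Type*} [Monoid M] {s : ℕ → Mˣ} {e : ℕ → M} {N : ℕ}

theorem absT_up (i d : ℕ) : SemiconjBy (s i : M) (absT s e (i + 1) d) (absT s e i (d + 1)) := by
  simp [SemiconjBy, absT, mul_assoc]

theorem absT_up_inv (i d : ℕ) :
    SemiconjBy (((s i)⁻¹ : Mˣ) : M) (absT s e i (d + 1)) (absT s e (i + 1) d) :=
  (absT_up i d).units_inv_symm_left

theorem sq_comm_of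
    (hss : ∀ i j, 1 ≤ i → i ≤ N → 1 ≤ j → j ≤ N → (j = i + 1 ∨ i = j + 1) →
      e i * s j * s i = s j * s i * e j)
    (hsi : ∀ i j, 1 ≤ i → i ≤ N → 1 ≤ j → j ≤ N → (j = i + 1 ∨ i = j + 1) →
      e i * s j * ((s i)⁻¹ : Mˣ) = s j * ((s i)⁻¹ : Mˣ) * e j)
    (i j : ℕ) (h1 : 1 ≤ i) (h2 : i ≤ N) (h3 : 1 ≤ j) (h4 : j ≤ N) (h5 : j = i + 1 ∨ i = j + 1) :
    SemiconjBy ((s i * s i : Mˣ) : M) (e j) (e j) := by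
  have A : SemiconjBy ((s j * s i : Mˣ) : M) (e j) (e i) := by
    simpa [SemiconjBy, mul_assoc] using (hss i j h1 h2 h3 h4 h5).symm
  have B : SemiconjBy ((s j * (s i)⁻¹ : Mˣ) : M) (e j) (e i) := by
    simpa [SemiconjBy, mul_assoc] using (hsi i j h1 h2 h3 h4 h5).symm
  have C := B.units_inv_symm_left.mul_left A
  rw [← Units.val_mul] at C
  have : (s j * (s i)⁻¹)⁻¹ * (s j * s i) = s i * s i := by group
  rwa [this] at C

theorem absT_far
    (hc : ∀ i j, 1 ≤ i → i + 1 < j → j ≤ N → s i * s j = s j * s i)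
    (hf : ∀ i j, 1 ≤ j → j + 1 < i → i ≤ N → e i * s j = s j * e i)
    (k d : ℕ) : ∀ i, 1 ≤ k → k + 1 < i → i + d ≤ N →
    SemiconjBy (s k : M) (absT s e i d) (absT s e i d) := by
  induction d with
  | zero => intro i h1 h2 h3; exact (hf i k h1 h2 (by omega)).symm
  | succ d ih =>
    intro i h1 h2 h3
    have h := ih (i + 1) h1 (by omega) (by omega)
    have c : Commute (s k) (s i) := hc k i h1 h2 (by omega)
    have c1 : Commute (s k : M) (s i : M) := by
      have := congrArg (Units.val) c.eq; simpa [Commute, SemiconjBy] using this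
    have c2 : Commute (s k : M) (((s i)⁻¹ : Mˣ) : M) := by
      have := congrArg (Units.val) c.inv_right.eq; simpa [Commute, SemiconjBy] using this
    exact (SemiconjBy.mul_right c1 h).mul_right c2

theorem absT_sq
    (hc : ∀ i j, 1 ≤ i → i + 1 < j → j ≤ N → s i * s j = s j * s i)
    (hb : ∀ i, 1 ≤ i → i + 1 ≤ N → s i * s (i + 1) * s i = s (i + 1) * s i * s (i + 1))
    (hf : ∀ i j, 1 ≤ j → j + 1 < i → i ≤ N → e i * s j = s j * e i)
    (hq : ∀ i j, 1 ≤ i → i ≤ N → 1 ≤ j → j ≤ N → (j = i + 1 ∨ i = j + 1) →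
      SemiconjBy ((s i * s i : Mˣ) : M) (e j) (e j))
    (d : ℕ) : ∀ i, 1 ≤ i → i + 1 + d ≤ N →
    SemiconjBy ((s i * s i : Mˣ) : M) (absT s e (i + 1) d) (absT s e (i + 1) d) := by
  induction d with
  | zero => intro i h1 h2; exact hq i (i + 1) h1 (by omega) (by omega) (by omega) (by omega)
  | succ d ih =>
    intro i h1 h2
    have h := ih (i + 1) (by omega) (by omega)
    have f := absT_far hc hf i d (i + 1 + 1) h1 (by omega) (by omega)
    have u := absT_up (s := s) (e := e) (i + 1) d
    have P := (((u.mul_left f).mul_left h).mul_left f.units_inv_symm_left).mul_left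
      u.units_inv_symm_left
    simp only [← Units.val_mul] at P
    have b := hb i h1 (by omega)
    have key : s (i + 1) * s i * (s (i + 1) * s (i + 1)) * (s i)⁻¹ * (s (i + 1))⁻¹
        = s i * s i := by
      calc _ = (s (i + 1) * s i * s (i + 1)) * s (i + 1) * (s i)⁻¹ * (s (i + 1))⁻¹ := by
              group
        _ = s i * (s (i + 1) * s i * s (i + 1)) * (s i)⁻¹ * (s (i + 1))⁻¹ := by
              rw [← b]; rw [mul_assoc (s i) (s (i + 1)) (s i), mul_assoc (s i) _ (s (i + 1)), ← b,
                mul_assoc (s i) (s (i + 1)) (s i)]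
        _ = s i * s i := by rw [← b]; group
    rwa [key] at P

theorem absT_down {i d : ℕ}
    (h : SemiconjBy ((s i * s i : Mˣ) : M) (absT s e (i + 1) d) (absT s e (i + 1) d)) :
    SemiconjBy (s i : M) (absT s e i (d + 1)) (absT s e (i + 1) d) := by
  have P := h.mul_left (absT_up_inv i d)
  rw [← Units.val_mul] at P
  simpa using P

theorem absT_right
    (hc : ∀ i j, 1 ≤ i → i + 1 < j → j ≤ N → s i * s j = s j * s i)
    (hss : ∀ i j, 1 ≤ i → i ≤ N → 1 ≤ j → j ≤ N → (j = i + 1 ∨ i = j + 1) →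
      e i * s j * s i = s j * s i * e j)
    (hq : ∀ i j, 1 ≤ i → i ≤ N → 1 ≤ j → j ≤ N → (j = i + 1 ∨ i = j + 1) →
      SemiconjBy ((s i * s i : Mˣ) : M) (e j) (e j))
    (d : ℕ) : ∀ i, 1 ≤ i → i + d + 1 ≤ N →
    SemiconjBy (s (i + d + 1) : M) (absT s e i (d + 1)) (absT s e i d) ∧
    SemiconjBy (s (i + d + 1) : M) (absT s e i d) (absT s e i (d + 1)) := by
  induction d with
  | zero =>
    intro i h1 h2
    have A : SemiconjBy ((s (i + 1) * s i : Mˣ) : M) (e (i + 1)) (e i) := by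
      simpa [SemiconjBy, mul_assoc] using
        (hss i (i + 1) h1 (by omega) (by omega) (by omega) (by omega)).symm
    have D : SemiconjBy (s (i + 1) : M) (absT s e i 1) (absT s e i 0) := by
      have P := A.mul_left (absT_up_inv (s := s) (e := e) i 0)
      rw [← Units.val_mul] at P
      simpa [absT] using P
    refine ⟨D, ?_⟩
    have Q := hq (i + 1) i (by omega) (by omega) (by omega) (by omega) (by omega)
    have P := D.units_inv_symm_left.mul_left Q
    rw [← Units.val_mul] at P
    simpa [absT] using P
  | succ d ih =>
    intro i h1 h2
    obtain ⟨ha, hb⟩ := ih (i + 1) (by omega) (by omega)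
    rw [show i + 1 + d + 1 = i + (d + 1) + 1 by omega] at ha hb
    have c : Commute (s (i + (d + 1) + 1)) (s i) := (hc i _ h1 (by omega) h2).symm
    have c1 : Commute (s (i + (d + 1) + 1) : M) (s i : M) := by
      have := congrArg (Units.val) c.eq; simpa [Commute, SemiconjBy] using this
    have c2 : Commute (s (i + (d + 1) + 1) : M) (((s i)⁻¹ : Mˣ) : M) := by
      have := congrArg (Units.val) c.inv_right.eq; simpa [Commute, SemiconjBy] using this
    exact ⟨(SemiconjBy.mul_right c1 ha).mul_right c2, (SemiconjBy.mul_right c1 hb).mul_right c2⟩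

end Abs

theorem mk_eq (n : ℕ) {a b : FreeMonoid (TBGen n)} (h : tbRel n a b) : mk n a = mk n b :=
  (Con.eq _).2 (ConGen.Rel.of _ _ h)

theorem wσ_mul_inv (n i : ℕ) : mk n (wσ n i) * mk n (wσi n i) = 1 := by
  by_cases h : 1 ≤ i ∧ i ≤ n - 1
  · rw [← map_mul, mk_eq n (tbRel.sig_inv i h.1 h.2), map_one]
  · simp [wσ, wσi, h]

theorem wσ_inv_mul (n i : ℕ) : mk n (wσi n i) * mk n (wσ n i) = 1 := by
  by_cases h : 1 ≤ i ∧ i ≤ n - 1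
  · rw [← map_mul, mk_eq n (tbRel.inv_sig i h.1 h.2), map_one]
  · simp [wσ, wσi, h]

/-- `σᵢ` as a unit of the monoid. -/
def sU (n i : ℕ) : (TB n)ˣ := ⟨mk n (wσ n i), mk n (wσi n i), wσ_mul_inv n i, wσ_inv_mul n i⟩

theorem ηg_eq_absT (n d : ℕ) : ∀ i, 1 ≤ i → ηg n i (i + 1 + d) = absT (sU n) (ηB n) i d := by
  have aux : ∀ i d, 1 ≤ i → wηg n i (i + 1 + d) =
      ((List.range' i d).map (wσ n)).prod * wη n (i + d) *
        ((List.range' i d).reverse.map (wσi n)).prod := by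
    intro i d h
    have e1 : i + 1 + d - 2 + 1 - i = d := by omega
    have e2 : i + 1 + d - 1 = i + d := by omega
    have e3 : i ≠ i + 1 + d := by omega
    have e4 : i ≤ i + 1 + d := by omega
    simp only [wηg, wσRange, wσiRangeRev, if_neg e3, min_eq_left e4, max_eq_right e4, e1, e2]
  induction d with
  | zero => intro i h; simp [ηg, aux i 0 h, absT, ηB]
  | succ d ih =>
    intro i h
    rw [absT, ← ih (i + 1) (by omega), ηg, ηg, aux i _ h, aux _ _ (by omega : 1 ≤ i + 1)]
    simp [List.range'_succ, mul_assoc, sU, show i + (d + 1) = i + 1 + d by omega,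
      Units.inv_mk]

end TiedBraidB

open TiedBraidB in
/-- Commutation relations between generalized ties and braid
generators in `TBₙᴮ`:
`σᵢ η_{i,j} = η_{i+1,j} σᵢ` for `1 ≤ i`, `i+1 < j ≤ n`;
`σⱼ η_{i,j} = η_{i,j+1} σⱼ` for `1 ≤ i < j ≤ n-1`;
`σ_{i-1} η_{i,j} = η_{i-1,j} σ_{i-1}` for `2 ≤ i < j ≤ n`;
`σ_{j-1} η_{i,j} = η_{i,j-1} σ_{j-1}` for `1 ≤ i < j-1` and `j ≤ n`. -/
theorem sigma_mul_generalizedTie (n : ℕ) :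
    (∀ (i j : ℕ) (_h1 : 1 ≤ i) (_h2 : i + 1 < j) (_h3 : j ≤ n),
      σB n i * ηg n i j = ηg n (i + 1) j * σB n i) ∧
    (∀ (i j : ℕ) (_h1 : 1 ≤ i) (_h2 : i < j) (_h3 : j ≤ n - 1),
      σB n j * ηg n i j = ηg n i (j + 1) * σB n j) ∧
    (∀ (i j : ℕ) (_h1 : 2 ≤ i) (_h2 : i < j) (_h3 : j ≤ n),
      σB n (i - 1) * ηg n i j = ηg n (i - 1) j * σB n (i - 1)) ∧
    (∀ (i j : ℕ) (_h1 : 1 ≤ i) (_h2 : i < j - 1) (_h3 : j ≤ n),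
      σB n (j - 1) * ηg n i j = ηg n i (j - 1) * σB n (j - 1)) := by
  have hc : ∀ i j, 1 ≤ i → i + 1 < j → j ≤ n - 1 → sU n i * sU n j = sU n j * sU n i := by
    intro i j h1 h2 h3
    ext
    simpa [sU] using mk_eq n (tbRel.sig_comm i j h1 h2 h3)
  have hb : ∀ i, 1 ≤ i → i + 1 ≤ n - 1 →
      sU n i * sU n (i + 1) * sU n i = sU n (i + 1) * sU n i * sU n (i + 1) := by
    intro i h1 h2
    ext
    simpa [sU] using mk_eq n (tbRel.sig_braid i h1 h2)
  have hf : ∀ i j, 1 ≤ j → j + 1 < i → i ≤ n - 1 →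
      ηB n i * sU n j = sU n j * ηB n i := by
    intro i j h1 h2 h3
    simpa [sU, ηB] using
      mk_eq n (tbRel.eta_sig_far i j (by omega) h3 h1 (by omega) (Or.inr h2))
  have hss : ∀ i j, 1 ≤ i → i ≤ n - 1 → 1 ≤ j → j ≤ n - 1 → (j = i + 1 ∨ i = j + 1) →
      ηB n i * sU n j * sU n i = sU n j * sU n i * ηB n j := by
    intro i j h1 h2 h3 h4 h5
    simpa [sU, ηB] using mk_eq n (tbRel.eta_sig_sig i j h1 h2 h3 h4 h5)
  have hsi : ∀ i j, 1 ≤ i → i ≤ n - 1 → 1 ≤ j → j ≤ n - 1 → (j = i + 1 ∨ i = j + 1) →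
      ηB n i * sU n j * ((sU n i)⁻¹ : (TB n)ˣ) = sU n j * ((sU n i)⁻¹ : (TB n)ˣ) * ηB n j := by
    intro i j h1 h2 h3 h4 h5
    simpa [sU, ηB, Units.inv_mk] using mk_eq n (tbRel.eta_sig_sigInv i j h1 h2 h3 h4 h5)
  have hq := sq_comm_of hss hsi
  refine ⟨?_, ?_, ?_, ?_⟩
  · intro i j h1 h2 h3
    obtain ⟨d, rfl⟩ : ∃ d, j = i + 1 + 1 + d := ⟨j - (i + 1 + 1), by omega⟩
    rw [ηg_eq_absT n d (i + 1) (by omega), show i + 1 + 1 + d = i + 1 + (d + 1) by omega,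
      ηg_eq_absT n (d + 1) i h1]
    exact absT_down (absT_sq hc hb hf hq d i h1 (by omega))
  · intro i j h1 h2 h3
    obtain ⟨d, rfl⟩ : ∃ d, j = i + 1 + d := ⟨j - (i + 1), by omega⟩
    rw [ηg_eq_absT n d i h1, show i + 1 + d + 1 = i + 1 + (d + 1) by omega,
      ηg_eq_absT n (d + 1) i h1, show i + 1 + d = i + d + 1 by omega]
    exact (absT_right hc hss hq d i h1 (by omega)).2
  · intro i j h1 h2 h3
    obtain ⟨k, rfl⟩ : ∃ k, i = k + 1 := ⟨i - 1, by omega⟩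
    obtain ⟨d, rfl⟩ : ∃ d, j = k + 1 + 1 + d := ⟨j - (k + 1 + 1), by omega⟩
    rw [Nat.add_sub_cancel, ηg_eq_absT n d (k + 1) (by omega),
      show k + 1 + 1 + d = k + 1 + (d + 1) by omega, ηg_eq_absT n (d + 1) k (by omega)]
    exact absT_up (s := sU n) (e := ηB n) k d
  · intro i j h1 h2 h3
    obtain ⟨d, rfl⟩ : ∃ d, j = i + 1 + (d + 1) := ⟨j - (i + 2), by omega⟩
    rw [show i + 1 + (d + 1) - 1 = i + 1 + d by omega, ηg_eq_absT n d i h1,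
      ηg_eq_absT n (d + 1) i h1, show i + 1 + d = i + d + 1 by omega]
    exact (absT_right hc hss hq d i h1 (by omega)).1
end

section
/- In the tied braid monoid TB_n^B of type B, for all pairwise distinct i, k, m ∈ {1, …, n} one has η_{i,k} η_{k,m} = η_{i,k} η_{i,m} = η_{k,m} η_{i,m}, where η_{a,b} denotes the generalized tie joining strands a and b (with η_{a,b} = η_{b,a}). -/
namespace TiedBraidB

/-- Three elements commute pairwise and have equal pairwise products. -/
def Tri {M : Type*} [Monoid M] (a b c : M) : Prop :=
  a * b = b * a ∧ a * c = c * a ∧ b * c = c * b ∧ a * b = a * c ∧ a * c = b * c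

theorem conj_mul {M : Type*} [Monoid M] {s t : M} (h : t * s = 1) (a b : M) :
    (s * a * t) * (s * b * t) = s * (a * b) * t := by
  calc (s * a * t) * (s * b * t) = s * a * (t * s) * b * t := by simp only [mul_assoc]
    _ = _ := by rw [h]; simp only [mul_assoc, one_mul]

theorem Tri.conj {M : Type*} [Monoid M] {s t a b c : M} (h : t * s = 1) (H : Tri a b c) :
    Tri (s * a * t) (s * b * t) (s * c * t) := by
  obtain ⟨h1, h2, h3, h4, h5⟩ := H
  refine ⟨?_, ?_, ?_, ?_, ?_⟩ <;> rw [conj_mul h, conj_mul h]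
  · rw [h1]
  · rw [h2]
  · rw [h3]
  · rw [h4]
  · rw [h5]

theorem conj_fix {M : Type*} [Monoid M] {s t x : M} (h : s * t = 1) (hc : s * x = x * s) :
    s * x * t = x := by
  rw [hc, mul_assoc, h, mul_one]

theorem comm_inv {M : Type*} [Monoid M] {s t x : M} (h : s * t = 1) (h' : t * s = 1)
    (hc : s * x = x * s) : t * x = x * t := by
  calc t * x = t * x * (s * t) := by rw [h, mul_one]
    _ = t * (x * s) * t := by simp only [mul_assoc]
    _ = t * s * x * t := by rw [← hc]; simp only [mul_assoc]
    _ = x * t := by rw [h', one_mul]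

variable {n : ℕ}

theorem mk_rel {a b : FreeMonoid (TBGen n)} (h : tbRel n a b) : mk n a = mk n b :=
  (Con.eq _).2 (ConGen.Rel.of _ _ h)

theorem s_inv {i : ℕ} (h1 : 1 ≤ i) (h2 : i ≤ n - 1) : σB n i * σiB n i = 1 := by
  simpa [σB, σiB] using mk_rel (tbRel.sig_inv i h1 h2)

theorem inv_s {i : ℕ} (h1 : 1 ≤ i) (h2 : i ≤ n - 1) : σiB n i * σB n i = 1 := by
  simpa [σB, σiB] using mk_rel (tbRel.inv_sig i h1 h2)

theorem s_comm {i j : ℕ} (h1 : 1 ≤ i) (h2 : i + 1 < j) (h3 : j ≤ n - 1) :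
    σB n i * σB n j = σB n j * σB n i := by
  simpa [σB] using mk_rel (tbRel.sig_comm i j h1 h2 h3)

theorem s_comm' {i j : ℕ} (h1 : 1 ≤ i) (h2 : i ≤ n - 1) (h3 : 1 ≤ j) (h4 : j ≤ n - 1)
    (h5 : i + 1 < j ∨ j + 1 < i) : σB n i * σB n j = σB n j * σB n i := by
  rcases h5 with h | h
  · exact s_comm h1 h h4
  · exact (s_comm h3 h h2).symm

theorem e_comm {i j : ℕ} (h1 : 1 ≤ i) (h2 : i ≤ n - 1) (h3 : 1 ≤ j) (h4 : j ≤ n - 1) :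
    ηB n i * ηB n j = ηB n j * ηB n i := by
  simpa [ηB] using mk_rel (tbRel.eta_comm i j h1 h2 h3 h4)

theorem e_s {i : ℕ} (h1 : 1 ≤ i) (h2 : i ≤ n - 1) : ηB n i * σB n i = σB n i * ηB n i := by
  simpa [ηB, σB] using mk_rel (tbRel.eta_sig i h1 h2)

theorem e_s_far {i j : ℕ} (h1 : 1 ≤ i) (h2 : i ≤ n - 1) (h3 : 1 ≤ j) (h4 : j ≤ n - 1)
    (h5 : i + 1 < j ∨ j + 1 < i) : ηB n i * σB n j = σB n j * ηB n i := by
  simpa [ηB, σB] using mk_rel (tbRel.eta_sig_far i j h1 h2 h3 h4 h5)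

/-- Generalized ties by recursion: `E i d` is `η_{i,i+1+d}`. -/
def E (n : ℕ) : ℕ → ℕ → TB n
  | i, 0 => ηB n i
  | i, d + 1 => σB n i * E n (i + 1) d * σiB n i

theorem ηg_comm (i j : ℕ) : ηg n i j = ηg n j i := by
  unfold ηg wηg
  rw [min_comm, max_comm]
  simp only [eq_comm]

theorem words_eq (d i : ℕ) :
    mk n ((List.range' i d).map (wσ n)).prod * ηB n (i + d) *
      mk n ((List.range' i d).reverse.map (wσi n)).prod = E n i d := by
  induction d generalizing i with
  | zero => simp [E]
  | succ d ih =>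
    rw [E, ← ih (i + 1), List.range'_succ]
    simp only [List.map_cons, List.prod_cons, map_mul, List.reverse_cons, List.map_append,
      List.prod_append, List.map_nil, List.prod_nil, mul_one, mul_assoc, σB, σiB]
    rw [show i + 1 + d = i + (d + 1) by omega]

theorem ηg_eq {i : ℕ} (d : ℕ) (h : 1 ≤ i) : ηg n i (i + 1 + d) = E n i d := by
  rw [← words_eq, ηg, wηg, if_neg (by omega), min_eq_left (by omega), max_eq_right (by omega),
    wσRange, wσiRangeRev, show i + 1 + d - 2 + 1 - i = d by omega,
    show i + 1 + d - 1 = i + d by omega, map_mul, map_mul, ηB]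

theorem s_E_comm {l : ℕ} (d : ℕ) : ∀ {i : ℕ}, 1 ≤ i → i + d ≤ n - 1 → 1 ≤ l → l ≤ n - 1 →
    (l + 1 < i ∨ i + d + 1 < l) → σB n l * E n i d = E n i d * σB n l := by
  induction d with
  | zero =>
    intro i h1 h2 h3 h4 h5
    exact (e_s_far h1 h2 h3 h4 (by omega)).symm
  | succ d ih =>
    intro i h1 h2 h3 h4 h5
    have a : Commute (σB n l) (E n (i + 1) d) :=
      ih (by omega) (by omega) h3 h4 (by omega)
    have b : Commute (σB n l) (σB n i) := s_comm' h3 h4 h1 (by omega) (by omega)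
    have c : Commute (σB n l) (σiB n i) :=
      (comm_inv (s_inv h1 (by omega)) (inv_s h1 (by omega)) b.symm).symm
    exact (b.mul_right a).mul_right c

theorem twist {i j : ℕ} (h1 : 1 ≤ i) (h2 : i ≤ n - 1) (h3 : 1 ≤ j) (h4 : j ≤ n - 1)
    (h5 : j = i + 1 ∨ i = j + 1) :
    σB n i * ηB n j * σiB n i = σiB n j * ηB n i * σB n j := by
  have h : ηB n i * σB n j * σB n i = σB n j * σB n i * ηB n j := by
    simpa [ηB, σB] using mk_rel (tbRel.eta_sig_sig i j h1 h2 h3 h4 h5)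
  calc σB n i * ηB n j * σiB n i
      = (σiB n j * σB n j) * σB n i * ηB n j * σiB n i := by rw [inv_s h3 h4, one_mul]
    _ = σiB n j * (σB n j * σB n i * ηB n j) * σiB n i := by simp only [mul_assoc]
    _ = σiB n j * ηB n i * σB n j * (σB n i * σiB n i) := by rw [← h]; simp only [mul_assoc]
    _ = _ := by rw [s_inv h1 h2, mul_one]

theorem twist' {i j : ℕ} (h1 : 1 ≤ i) (h2 : i ≤ n - 1) (h3 : 1 ≤ j) (h4 : j ≤ n - 1)
    (h5 : j = i + 1 ∨ i = j + 1) :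
    σiB n i * ηB n j * σB n i = σiB n j * ηB n i * σB n j := by
  have h : ηB n i * σB n j * σiB n i = σB n j * σiB n i * ηB n j := by
    simpa [ηB, σB, σiB] using mk_rel (tbRel.eta_sig_sigInv i j h1 h2 h3 h4 h5)
  calc σiB n i * ηB n j * σB n i
      = (σiB n j * σB n j) * σiB n i * ηB n j * σB n i := by rw [inv_s h3 h4, one_mul]
    _ = σiB n j * (σB n j * σiB n i * ηB n j) * σB n i := by simp only [mul_assoc]
    _ = σiB n j * ηB n i * σB n j * (σiB n i * σB n i) := by rw [← h]; simp only [mul_assoc]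
    _ = _ := by rw [inv_s h1 h2, mul_one]

theorem E_up (d : ℕ) : ∀ {i : ℕ}, 1 ≤ i → i + d + 1 ≤ n - 1 →
    E n i (d + 1) = σiB n (i + d + 1) * E n i d * σB n (i + d + 1) := by
  induction d with
  | zero =>
    intro i h1 h2
    exact twist h1 (by omega) (by omega) h2 (Or.inl rfl)
  | succ d ih =>
    intro i h1 h2
    have e := ih (i := i + 1) (by omega) (by omega)
    rw [show i + 1 + d + 1 = i + (d + 1) + 1 by omega] at e
    rw [E, e, E]
    generalize hL : i + (d + 1) + 1 = L at *
    have a : σB n i * σB n L = σB n L * σB n i := s_comm h1 (by omega) h2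
    have b : σiB n i * σB n L = σB n L * σiB n i :=
      comm_inv (s_inv h1 (by omega)) (inv_s h1 (by omega)) a
    have c : σiB n L * σB n i = σB n i * σiB n L :=
      comm_inv (s_inv (by omega) h2) (inv_s (by omega) h2) a.symm
    calc σB n i * (σiB n L * E n (i + 1) d * σB n L) * σiB n i
        = (σB n i * σiB n L) * E n (i + 1) d * (σB n L * σiB n i) := by simp only [mul_assoc]
      _ = _ := by rw [← b, ← c]; simp only [mul_assoc]

theorem tri_base {i : ℕ} (h1 : 1 ≤ i) (h2 : i + 1 ≤ n - 1) :
    Tri (E n i 0) (E n (i + 1) 0) (E n i 1) := by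
  have hs : σB n i * σiB n i = 1 := s_inv h1 (by omega)
  have ht : σiB n i * σB n i = 1 := inv_s h1 (by omega)
  have hc := e_comm (n := n) h1 (by omega) (j := i + 1) (by omega) h2
  have hes := e_s (n := n) h1 (by omega)
  have r1 : ηB n i * ηB n (i + 1) * σB n i = σB n i * ηB n i * ηB n (i + 1) := by
    simpa [ηB, σB] using
      mk_rel (tbRel.eta_eta_sig i (i + 1) h1 (by omega) (by omega) h2 (Or.inl rfl))
  have r2 : ηB n i * ηB n (i + 1) * σB n i = ηB n (i + 1) * σB n i * ηB n (i + 1) := by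
    simpa [ηB, σB] using
      mk_rel (tbRel.eta_eta_sig' i (i + 1) h1 (by omega) (by omega) h2 (Or.inl rfl))
  have tw : σB n i * ηB n (i + 1) * σiB n i = σiB n i * ηB n (i + 1) * σB n i :=
    (twist h1 (by omega) (by omega) h2 (Or.inl rfl)).trans
      (twist' h1 (by omega) (by omega) h2 (Or.inl rfl)).symm
  have hti := comm_inv hs ht hes.symm
  simp only [E]
  generalize σB n i = s at *
  generalize σiB n i = t at *
  generalize ηB n i = a at *
  generalize ηB n (i + 1) = b at *
  have AC : a * (s * b * t) = a * b := by
    calc a * (s * b * t) = (a * s) * b * t := by simp only [mul_assoc]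
      _ = a * b * s * t := by rw [hes, r1]
      _ = a * b := by rw [mul_assoc, hs, mul_one]
  have CA : (s * b * t) * a = a * b := by
    calc (s * b * t) * a = s * b * (t * a) := by simp only [mul_assoc]
      _ = s * (b * a) * t := by rw [hti]; simp only [mul_assoc]
      _ = s * a * b * t := by rw [← hc]; simp only [mul_assoc]
      _ = a * b := by rw [← r1, mul_assoc, hs, mul_one]
  have BC : b * (s * b * t) = a * b := by
    calc b * (s * b * t) = (b * s * b) * t := by simp only [mul_assoc]
      _ = a * b := by rw [← r2, mul_assoc, hs, mul_one]
  have CB : (s * b * t) * b = a * b := by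
    calc (s * b * t) * b = t * (b * s * b) := by rw [tw]; simp only [mul_assoc]
      _ = t * s * a * b := by rw [← r2, r1]; simp only [mul_assoc]
      _ = a * b := by rw [ht, one_mul]
  exact ⟨hc, AC.trans CA.symm, BC.trans CB.symm, AC.symm, AC.trans BC.symm⟩

theorem tri_up (d : ℕ) {i : ℕ} (h1 : 1 ≤ i) (h2 : i + 1 + d ≤ n - 1) :
    Tri (E n i 0) (E n (i + 1) d) (E n i (d + 1)) := by
  induction d with
  | zero => exact tri_base h1 h2
  | succ d ih =>
    have hL1 : 1 ≤ i + (d + 1) + 1 := by omega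
    have hL2 : i + (d + 1) + 1 ≤ n - 1 := by omega
    have H := (ih (by omega)).conj (s_inv hL1 hL2)
    have e1 := E_up (n := n) d (i := i + 1) (by omega) (by omega)
    rw [show i + 1 + d + 1 = i + (d + 1) + 1 by omega] at e1
    rw [← E_up (d + 1) h1 hL2, ← e1, conj_fix (inv_s hL1 hL2)] at H
    · exact H
    · exact comm_inv (s_inv hL1 hL2) (inv_s hL1 hL2)
        (s_E_comm 0 h1 (by omega) hL1 hL2 (by omega))

theorem tri_all (c d : ℕ) : ∀ {i : ℕ}, 1 ≤ i → i + c + 1 + d ≤ n - 1 →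
    Tri (E n i c) (E n (i + 1 + c) d) (E n i (c + 1 + d)) := by
  induction c with
  | zero =>
    intro i h1 h2
    simpa [Nat.add_comm] using tri_up (n := n) d h1 (by omega)
  | succ c ih =>
    intro i h1 h2
    have H := (ih (i := i + 1) (by omega) (by omega)).conj
      (inv_s (n := n) (i := i) h1 (by omega))
    rw [conj_fix (s_inv h1 (by omega))
      (s_E_comm d (by omega) (by omega) h1 (by omega) (by omega))] at H
    rw [show c + 1 + 1 + d = (c + 1 + d) + 1 by omega, show i + 1 + (c + 1) = i + 1 + 1 + c by omega]
    exact H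

theorem tri_sorted {i k m : ℕ} (h1 : 1 ≤ i) (h2 : i < k) (h3 : k < m) (h4 : m ≤ n) :
    Tri (ηg n i k) (ηg n k m) (ηg n i m) := by
  obtain ⟨c, rfl⟩ : ∃ c, k = i + 1 + c := ⟨k - (i + 1), by omega⟩
  obtain ⟨d, rfl⟩ : ∃ d, m = i + 1 + c + 1 + d := ⟨m - (i + 1 + c + 1), by omega⟩
  rw [ηg_eq c h1, ηg_eq d (by omega),
    show i + 1 + c + 1 + d = i + 1 + (c + 1 + d) by omega, ηg_eq _ h1]
  exact tri_all c d h1 (by omega)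

end TiedBraidB

open TiedBraidB in
/-- In `TBₙᴮ`, for all pairwise distinct `i, k, m ∈ {1, …, n}` one has
`η_{i,k} η_{k,m} = η_{i,k} η_{i,m} = η_{k,m} η_{i,m}`. -/
theorem generalizedTies_transitive_products (n i k m : ℕ)
    (hi1 : 1 ≤ i) (hi2 : i ≤ n) (hk1 : 1 ≤ k) (hk2 : k ≤ n) (hm1 : 1 ≤ m) (hm2 : m ≤ n)
    (hik : i ≠ k) (hkm : k ≠ m) (him : i ≠ m) :
    ηg n i k * ηg n k m = ηg n i k * ηg n i m ∧
    ηg n i k * ηg n i m = ηg n k m * ηg n i m := by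
  rcases lt_or_gt_of_ne hik with a | a <;> rcases lt_or_gt_of_ne hkm with b | b <;>
    rcases lt_or_gt_of_ne him with c | c
  · obtain ⟨h1, h2, h3, h4, h5⟩ := tri_sorted hi1 a b hm2
    exact ⟨h4, h5⟩
  · omega
  · obtain ⟨h1, h2, h3, h4, h5⟩ := tri_sorted hi1 c b hk2
    rw [ηg_comm k m]
    grind
  · obtain ⟨h1, h2, h3, h4, h5⟩ := tri_sorted hm1 c a hk2
    rw [ηg_comm k m, ηg_comm i m]
    grind
  · obtain ⟨h1, h2, h3, h4, h5⟩ := tri_sorted hk1 a c hm2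
    rw [ηg_comm i k]
    grind
  · obtain ⟨h1, h2, h3, h4, h5⟩ := tri_sorted hk1 b c hi2
    rw [ηg_comm i k, ηg_comm i m]
    grind
  · omega
  · obtain ⟨h1, h2, h3, h4, h5⟩ := tri_sorted hm1 b a hi2
    rw [ηg_comm i k, ηg_comm k m, ηg_comm i m]
    grind
end
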